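/- Let V be an (n+2)-dimensional vector space with nondegenerate symmetric form g and I ∈ V with g(I,I) = ι ≠ 0. Then the space 𝔠 = {W algebraic Weyl tensor on V : I^A W_{AB[CD} I_{E]} = 0} has dimension n(n+1)²(n+2)/12 − 1, i.e. equals dim(ℜ^{n+1}) − 1 where ℜ^{n+1} is the space of algebraic curvature tensors in dimension n+1. -/

import Mathlib

noncomputable section
open scoped BigOperators

/-- Rank-4 covariant tensors on `ℝ^N`. -/
abbrev T4 (N : ℕ) := Fin N → Fin N → Fin N → Fin N → ℝ

/-- Rank-5 covariant tensors on `ℝ^N`. -/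
abbrev T5 (N : ℕ) := Fin N → Fin N → Fin N → Fin N → Fin N → ℝ

/-- The linear map whose kernel is the space
`𝔠 = {W algebraic Weyl tensor : I^A W_{AB[CD} I_{E]} = 0}`:
component 0,1 are the two antisymmetries, component 2 is the first Bianchi
identity, component 3 is the trace `W_{ABC}{}^B` (padded to five arguments),
and component 4 is `I^A W_{AB[CD} I_{E]}` (indices of `I` lowered with `g`). -/
def weylCondMap {N : ℕ} (g gi : Fin N → Fin N → ℝ) (I : Fin N → ℝ) :
    T4 N →ₗ[ℝ] (Fin 5 → T5 N) where
  toFun W := fun i A B C D E =>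
    if i = 0 then W A B C D + W B A C D
    else if i = 1 then W A B C D + W A B D C
    else if i = 2 then W A B C D + W B C A D + W C A B D
    else if i = 3 then ∑ x, ∑ y, gi x y * W A x C y
    else
      (∑ F, I F * W F B C D) * (∑ G, g E G * I G)
        + (∑ F, I F * W F B D E) * (∑ G, g C G * I G)
        + (∑ F, I F * W F B E C) * (∑ G, g D G * I G)
  map_add' := by
    intro W W'
    funext i A B C D E
    simp only [Pi.add_apply, mul_add, Finset.sum_add_distrib, add_mul]
    split_ifs <;> ring
  map_smul' := by
    intro r W
    funext i A B C D E
    simp only [Pi.smul_apply, smul_eq_mul, RingHom.id_apply]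
    split_ifs with h0 h1 h2 h3
    · ring
    · ring
    · ring
    · rw [Finset.mul_sum]
      refine Finset.sum_congr rfl fun x _ => ?_
      rw [Finset.mul_sum]
      refine Finset.sum_congr rfl fun y _ => by ring
    · have e1 : (∑ F, I F * (r * W F B C D)) = r * ∑ F, I F * W F B C D := by
        rw [Finset.mul_sum]; exact Finset.sum_congr rfl fun F _ => by ring
      have e2 : (∑ F, I F * (r * W F B D E)) = r * ∑ F, I F * W F B D E := by
        rw [Finset.mul_sum]; exact Finset.sum_congr rfl fun F _ => by ring
      have e3 : (∑ F, I F * (r * W F B E C)) = r * ∑ F, I F * W F B E C := by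
        rw [Finset.mul_sum]; exact Finset.sum_congr rfl fun F _ => by ring
      rw [e1, e2, e3]; ring

open Matrix

/-!
Let `l` be `I` with its index lowered, `ι = g(I, I)`, and let `∧` be the Kulkarni–Nomizu product.
Contracting `I^A W_{AB[CD} I_{E]} = 0` with `I^E` expresses `I^A W_{ABCD}` through the symmetric
form `J = W(I, ·, I, ·)`; since `(l ⊗ l) ∧ r` has the same shape of contraction,
`W ↦ W - ι⁻² (l ⊗ l) ∧ J` lands in the curvature tensors `R` of zero scalar curvature with
`I^A R_{ABCD} = 0`, and `R ↦ R - ι⁻¹ (l ⊗ l) ∧ Ric R` is the inverse. The scalar curvature is a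
nonzero functional on `{R : I^A R_{ABCD} = 0}`, so it remains to find the dimension of that space.
It is the image of the projection that applies the Young symmetrizer and then, in all four slots, a
projection `h` of corank one that kills `I`. Its dimension is therefore the trace of this
projection, `t² (t² - 1) / 12` with `t = tr h = n + 1`.
-/

theorem trace_eq_sum_trace_proj_comp_single {α K M : Type*} [Fintype α] [DecidableEq α]
    [CommRing K] [AddCommGroup M] [Module K M] [Module.Free K M] [Module.Finite K M]
    (f : (α → M) →ₗ[K] (α → M)) :
    LinearMap.trace K (α → M) f = ∑ a, LinearMap.trace K M
      (LinearMap.proj a ∘ₗ f ∘ₗ LinearMap.single K (fun _ => M) a) := by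
  have hf : f = ∑ a, (f ∘ₗ LinearMap.single K (fun _ => M) a) ∘ₗ LinearMap.proj a := by
    refine LinearMap.ext fun v => ?_
    simp only [LinearMap.sum_apply, LinearMap.comp_apply, ← map_sum, LinearMap.proj_apply,
      LinearMap.single_apply, Finset.univ_sum_single]
  conv_lhs => rw [hf, map_sum]
  exact Finset.sum_congr rfl fun a _ => LinearMap.trace_comp_comm' _ _

theorem finrank_inf_ker_add_one {K M : Type*} [Field K] [AddCommGroup M] [Module K M]
    [FiniteDimensional K M] {S : Submodule K M} {f : M →ₗ[K] K} {x : M} (hx : x ∈ S)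
    (hfx : f x ≠ 0) : Module.finrank K ↥(S ⊓ LinearMap.ker f) + 1 = Module.finrank K S := by
  have hne : f.domRestrict S ≠ 0 := fun h => hfx (LinearMap.congr_fun h ⟨x, hx⟩)
  rw [← Module.Dual.finrank_ker_add_one_of_ne_zero hne, ← Submodule.map_comap_subtype,
    Submodule.finrank_map_subtype_eq]
  rfl

section RankOne

variable {α K : Type*} [Fintype α] [DecidableEq α] [CommRing K] {u v : α → K}

theorem isIdempotentElem_one_sub_vecMulVec (huv : v ⬝ᵥ u = 1) :
    IsIdempotentElem (1 - vecMulVec u v) := by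
  refine IsIdempotentElem.one_sub ?_
  rw [IsIdempotentElem, vecMulVec_mul_vecMulVec, huv, one_smul]

theorem trace_one_sub_vecMulVec (huv : v ⬝ᵥ u = 1) :
    (1 - vecMulVec u v).trace = (Fintype.card α : K) - 1 := by
  rw [trace_sub, trace_one, trace_vecMulVec, dotProduct_comm, huv]

end RankOne

/-- Covariant 4-tensors over `K`, given by their components in a basis indexed by `α`. -/
abbrev Tensor4 (α K : Type*) := α → α → α → α → K

namespace Tensor4

variable {α K : Type*} [Field K]

variable (α K) in
/-- The algebraic curvature tensors `ℜ(V)`; the symmetry under exchange of the two index pairs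
follows from the three conditions. -/
def curvatureTensors : Submodule K (Tensor4 α K) where
  carrier := {R | (∀ a b c d, R b a c d = -R a b c d) ∧ (∀ a b c d, R a b d c = -R a b c d) ∧
    ∀ a b c d, R a b c d + R b c a d + R c a b d = 0}
  zero_mem' := by simp
  add_mem' := by
    rintro R S ⟨hR₁, hR₂, hR₃⟩ ⟨hS₁, hS₂, hS₃⟩
    refine ⟨fun a b c d => ?_, fun a b c d => ?_, fun a b c d => ?_⟩ <;> simp only [Pi.add_apply]
    · linear_combination hR₁ a b c d + hS₁ a b c d
    · linear_combination hR₂ a b c d + hS₂ a b c d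
    · linear_combination hR₃ a b c d + hS₃ a b c d
  smul_mem' := by
    rintro t R ⟨hR₁, hR₂, hR₃⟩
    refine ⟨fun a b c d => ?_, fun a b c d => ?_, fun a b c d => ?_⟩ <;>
      simp only [Pi.smul_apply, smul_eq_mul]
    · linear_combination t * hR₁ a b c d
    · linear_combination t * hR₂ a b c d
    · linear_combination t * hR₃ a b c d

theorem pair_symm [CharZero K] {R : Tensor4 α K} (hR : R ∈ curvatureTensors α K) (a b c d : α) :
    R c d a b = R a b c d := by
  obtain ⟨h₁, h₂, h₃⟩ := hR
  grind

/-- The Young symmetrizer of the `2 × 2` tableau with rows `{1, 3}` and `{2, 4}`: symmetrization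
along the rows, then antisymmetrization along the columns, normalized to be idempotent. -/
def youngSymmetrizer : Tensor4 α K →ₗ[K] Tensor4 α K where
  toFun T :=
    let S : Tensor4 α K := fun a b c d => T a b c d + T c b a d + T a d c b + T c d a b
    fun a b c d => (S a b c d - S b a c d - S a b d c + S b a d c) / 12
  map_add' T U := by
    ext; simp only [Pi.add_apply]; ring
  map_smul' t T := by
    ext; simp only [Pi.smul_apply, smul_eq_mul, RingHom.id_apply]; ring

theorem isProj_youngSymmetrizer [CharZero K] :
    LinearMap.IsProj (curvatureTensors α K) (youngSymmetrizer (α := α) (K := K)) where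
  map_mem T := by
    refine ⟨?_, ?_, ?_⟩ <;> intro a b c d <;>
      simp only [youngSymmetrizer, LinearMap.coe_mk, AddHom.coe_mk] <;> ring
  map_id R hR := by
    have hpair := pair_symm hR
    obtain ⟨h₁, h₂, h₃⟩ := hR
    ext a b c d
    simp only [youngSymmetrizer, LinearMap.coe_mk, AddHom.coe_mk]
    grind

section Trace

variable [Fintype α]

theorem trace_eq_sum_single [DecidableEq α] (f : Tensor4 α K →ₗ[K] Tensor4 α K) :
    LinearMap.trace K (Tensor4 α K) f = ∑ a, ∑ b, ∑ c, ∑ d,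
      f (Pi.single a (Pi.single b (Pi.single c (Pi.single d 1)))) a b c d := by
  simp [trace_eq_sum_trace_proj_comp_single, LinearMap.toMatrix_apply, Matrix.trace,
    LinearMap.trace_eq_matrix_trace K (Module.Basis.singleton Unit K)]

/-- The action of `h` on all four slots of a tensor, the analogue of `h * M * hᵀ` for
2-tensors. -/
def congruence (h : Matrix α α K) : Tensor4 α K →ₗ[K] Tensor4 α K where
  toFun R a b c d := ∑ A, ∑ B, ∑ C, ∑ D, h a A * h b B * h c C * h d D * R A B C D
  map_add' R S := by ext; simp [mul_add, Finset.sum_add_distrib]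
  map_smul' t R := by ext; simp [mul_left_comm, Finset.mul_sum]

theorem congruence_mem_curvatureTensors (h : Matrix α α K) {R : Tensor4 α K}
    (hR : R ∈ curvatureTensors α K) : congruence h R ∈ curvatureTensors α K := by
  obtain ⟨h₁, h₂, h₃⟩ := hR
  refine ⟨fun a b c d => ?_, fun a b c d => ?_, fun a b c d => ?_⟩ <;>
    simp only [congruence, LinearMap.coe_mk, AddHom.coe_mk]
  · rw [Finset.sum_comm]
    simp only [← Finset.sum_neg_distrib]
    congr! 4 with A _ B _ C _ D _
    linear_combination h a A * h b B * h c C * h d D * h₁ A B C D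
  · rw [Finset.sum_congr rfl fun A _ => Finset.sum_congr rfl fun B _ => Finset.sum_comm]
    simp only [← Finset.sum_neg_distrib]
    congr! 4 with A _ B _ C _ D _
    linear_combination h a A * h b B * h c C * h d D * h₂ A B C D
  · rw [Finset.sum_comm_cycle (f := fun B C A => ∑ D, h b B * h c C * h a A * h d D * R B C A D),
      ← Finset.sum_comm_cycle (f := fun A B C => ∑ D, h c C * h a A * h b B * h d D * R C A B D)]
    simp only [← Finset.sum_add_distrib]
    refine Finset.sum_eq_zero fun A _ => Finset.sum_eq_zero fun B _ =>
      Finset.sum_eq_zero fun C _ => Finset.sum_eq_zero fun D _ => ?_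
    linear_combination h a A * h b B * h c C * h d D * h₃ A B C D

theorem congruence_single [DecidableEq α] (h : Matrix α α K) (A B C D a b c d : α) :
    congruence h (Pi.single A (Pi.single B (Pi.single C (Pi.single D 1)))) a b c d =
      h a A * h b B * h c C * h d D := by
  simp [congruence, Pi.single_apply, ite_apply]

theorem trace_youngSymmetrizer_comp_congruence {h : Matrix α α K} (hh : IsIdempotentElem h) :
    LinearMap.trace K (Tensor4 α K) (youngSymmetrizer ∘ₗ congruence h) =
      h.trace ^ 2 * (h.trace ^ 2 - 1) / 12 := by
  classical
  have htr (x : K) : ∑ d, x * h d d = x * h.trace := (Finset.mul_sum ..).symm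
  have hlast (x : K) (y s : α) : ∑ d, x * h d y * h s d = x * h s y := by
    rw [← congr_fun₂ hh.eq s y, Matrix.mul_apply, Finset.mul_sum]
    congr! 1; ring
  have hmid (x u : K) (y s : α) : ∑ d, x * h d y * u * h s d = x * h s y * u := by
    simpa only [mul_right_comm _ u] using hlast (x * u) y s
  have hmid₂ (x u v : K) (y s : α) :
      ∑ d, x * h d y * u * v * h s d = x * h s y * u * v := by
    simpa only [mul_assoc] using hmid x (u * v) y s
  -- The leading `1` gives every sum below one of the four shapes above.
  have hsingle (A B C D a b c d : α) :
      congruence h (Pi.single A (Pi.single B (Pi.single C (Pi.single D 1)))) a b c d =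
        1 * h a A * h b B * h c C * h d D := by rw [congruence_single, one_mul]
  -- `h` being idempotent, a permutation of the slots contributes `tr h` for each of its cycles.
  rw [trace_eq_sum_single]
  simp only [youngSymmetrizer, LinearMap.comp_apply, LinearMap.coe_mk, AddHom.coe_mk,
    hsingle, ← Finset.sum_div, Finset.sum_add_distrib, Finset.sum_sub_distrib,
    htr, hlast, hmid, hmid₂, ← Finset.sum_mul]
  ring

end Trace

section Horizontal

variable [Fintype α]

/-- The contraction `I^A R_{ABCD}`. -/
def contractFirst (I : α → K) : Tensor4 α K →ₗ[K] α → α → α → K :=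
  ∑ a, I a • LinearMap.proj a

theorem contractFirst_apply (I : α → K) (R : Tensor4 α K) (b c d : α) :
    contractFirst I R b c d = ∑ a, I a * R a b c d := by
  simp [contractFirst]

/-- The algebraic curvature tensors `R` with `I^A R_{ABCD} = 0`. -/
def horizontalCurvature (I : α → K) : Submodule K (Tensor4 α K) :=
  curvatureTensors α K ⊓ LinearMap.ker (contractFirst I)

variable {I : α → K}

theorem sum_mul_first {R : Tensor4 α K} (hR : R ∈ horizontalCurvature I) (b c d : α) :
    ∑ a, I a * R a b c d = 0 := by
  rw [← contractFirst_apply, LinearMap.mem_ker.1 hR.2]; rfl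

theorem sum_mul_second {R : Tensor4 α K} (hR : R ∈ horizontalCurvature I) (a c d : α) :
    ∑ b, I b * R a b c d = 0 := by
  simp only [hR.1.1 _ a, mul_neg, Finset.sum_neg_distrib, sum_mul_first hR, neg_zero]

theorem contractFirst_congruence {h : Matrix α α K} (hI : I ᵥ* h = 0) (R : Tensor4 α K) :
    contractFirst I (congruence h R) = 0 := by
  ext b c d
  have hIh (A : α) : ∑ a, I a * h a A = 0 := congr_fun hI A
  simp only [contractFirst_apply, congruence, LinearMap.coe_mk, AddHom.coe_mk, Finset.mul_sum]
  rw [Finset.sum_comm]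
  refine Finset.sum_eq_zero fun A _ => ?_
  simp only [← Finset.mul_sum, mul_assoc]
  simp only [← mul_assoc, ← Finset.sum_mul, hIh, zero_mul]

variable [CharZero K]

theorem sum_mul_third {R : Tensor4 α K} (hR : R ∈ horizontalCurvature I) (a b d : α) :
    ∑ c, I c * R a b c d = 0 := by
  simp only [pair_symm hR.1 _ d, sum_mul_first hR]

theorem sum_mul_fourth {R : Tensor4 α K} (hR : R ∈ horizontalCurvature I) (a b c : α) :
    ∑ d, I d * R a b c d = 0 := by
  simp only [pair_symm hR.1 c, sum_mul_second hR]

theorem congruence_eq_self {h : Matrix α α K} (hfix : ∀ v : α → K, I ⬝ᵥ v = 0 → h *ᵥ v = v)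
    {R : Tensor4 α K} (hR : R ∈ horizontalCurvature I) : congruence h R = R := by
  have hsum (v : α → K) (hv : ∑ a, I a * v a = 0) (a : α) : ∑ A, h a A * v A = v a :=
    congr_fun (hfix v hv) a
  ext a b c d
  simp only [congruence, LinearMap.coe_mk, AddHom.coe_mk, mul_assoc, ← Finset.mul_sum,
    hsum _ (sum_mul_fourth hR _ _ _)]
  simp only [hsum (fun C => R _ _ C _) (sum_mul_third hR _ _ _),
    hsum (fun B => R _ B _ _) (sum_mul_second hR _ _ _),
    hsum (fun A => R A _ _ _) (sum_mul_first hR _ _ _)]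

theorem isProj_congruence_comp_youngSymmetrizer {h : Matrix α α K} (hI : I ᵥ* h = 0)
    (hfix : ∀ v : α → K, I ⬝ᵥ v = 0 → h *ᵥ v = v) :
    LinearMap.IsProj (horizontalCurvature I) (congruence h ∘ₗ youngSymmetrizer) where
  map_mem T := ⟨congruence_mem_curvatureTensors h (isProj_youngSymmetrizer.map_mem T),
    contractFirst_congruence hI _⟩
  map_id R hR := by
    rw [LinearMap.comp_apply, isProj_youngSymmetrizer.map_id R hR.1, congruence_eq_self hfix hR]

theorem finrank_horizontalCurvature (hI : I ≠ 0) :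
    (Module.finrank K (horizontalCurvature I) : K) =
      ((Fintype.card α : K) - 1) ^ 2 * (((Fintype.card α : K) - 1) ^ 2 - 1) / 12 := by
  classical
  obtain ⟨i, hi⟩ := Function.ne_iff.1 hI
  obtain ⟨u, hu⟩ : ∃ u, I ⬝ᵥ u = 1 := ⟨Pi.single i (I i)⁻¹, by simpa using mul_inv_cancel₀ hi⟩
  have hI' : I ᵥ* (1 - vecMulVec u I) = 0 := by
    rw [vecMul_sub, vecMul_one, vecMul_vecMulVec, hu, one_smul, sub_self]
  have hfix (v : α → K) (hv : I ⬝ᵥ v = 0) : (1 - vecMulVec u I) *ᵥ v = v := by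
    rw [sub_mulVec, one_mulVec, vecMulVec_mulVec, hv, MulOpposite.op_zero, zero_smul, sub_zero]
  rw [← (isProj_congruence_comp_youngSymmetrizer hI' hfix).trace, LinearMap.trace_comp_comm',
    trace_youngSymmetrizer_comp_congruence (isIdempotentElem_one_sub_vecMulVec hu),
    trace_one_sub_vecMulVec hu]

end Horizontal

/-- The Kulkarni–Nomizu product of symmetric 2-tensors, linear in the second factor. -/
def kulkarniNomizu (h : Matrix α α K) : Matrix α α K →ₗ[K] Tensor4 α K where
  toFun k a b c d := h a c * k b d + h b d * k a c - h a d * k b c - h b c * k a d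
  map_add' k k' := by ext; simp only [Matrix.add_apply, Pi.add_apply]; ring
  map_smul' t k := by
    ext; simp only [Matrix.smul_apply, Pi.smul_apply, smul_eq_mul, RingHom.id_apply]; ring

theorem kulkarniNomizu_apply (h k : Matrix α α K) (a b c d : α) :
    kulkarniNomizu h k a b c d =
      h a c * k b d + h b d * k a c - h a d * k b c - h b c * k a d := rfl

theorem kulkarniNomizu_mem_curvatureTensors {h k : Matrix α α K} (hh : h.IsSymm) (hk : k.IsSymm) :
    kulkarniNomizu h k ∈ curvatureTensors α K := by
  refine ⟨fun a b c d => ?_, fun a b c d => ?_, fun a b c d => ?_⟩ <;>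
    simp only [kulkarniNomizu_apply]
  · ring
  · ring
  · rw [hh.apply a c, hh.apply b c, hh.apply a b, hk.apply a c, hk.apply b c, hk.apply a b]; ring

section Contractions

variable [Fintype α]

theorem contractFirst_kulkarniNomizu (I : α → K) (h k : Matrix α α K) (b c d : α) :
    contractFirst I (kulkarniNomizu h k) b c d =
      (I ᵥ* h) c * k b d + h b d * (I ᵥ* k) c - (I ᵥ* h) d * k b c - h b c * (I ᵥ* k) d := by
  simp only [contractFirst_apply, kulkarniNomizu_apply, vecMul, dotProduct, Finset.sum_mul,
    Finset.mul_sum, ← Finset.sum_add_distrib, ← Finset.sum_sub_distrib]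
  congr! 1; ring

/-- The contraction `γ^{BD} R_{ABCD}`. For `γ = g⁻¹` this is the Ricci tensor; for `γ = I ⊗ I` it is
the symmetric form `R(·, I, ·, I)`. -/
def ricci (γ : Matrix α α K) : Tensor4 α K →ₗ[K] Matrix α α K where
  toFun R := of fun a c => ∑ x, ∑ y, γ x y * R a x c y
  map_add' R S := by ext; simp [mul_add, Finset.sum_add_distrib]
  map_smul' t R := by ext; simp [mul_left_comm, Finset.mul_sum]

theorem ricci_apply (γ : Matrix α α K) (R : Tensor4 α K) (a c : α) :
    ricci γ R a c = ∑ x, ∑ y, γ x y * R a x c y := rfl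

theorem ricci_kulkarniNomizu {γ : Matrix α α K} (hγ : γ.IsSymm) (h k : Matrix α α K) :
    ricci γ (kulkarniNomizu h k) =
      (γ * k).trace • h + (γ * h).trace • k - h * γ * k - k * γ * h := by
  have htr (m : Matrix α α K) : (γ * m).trace = ∑ x, ∑ y, γ x y * m x y := by
    rw [trace_mul_comm]
    simp only [trace, diag_apply, mul_apply, hγ.apply, mul_comm]
  have hmul (m m' : Matrix α α K) (a c : α) :
      (m * γ * m') a c = ∑ x, ∑ y, m a y * γ x y * m' x c := by
    simp only [mul_apply, Finset.sum_mul, hγ.apply]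
  ext a c
  simp only [ricci_apply, kulkarniNomizu_apply, htr, hmul, Matrix.sub_apply, Matrix.add_apply,
    Matrix.smul_apply, smul_eq_mul, Finset.sum_mul, ← Finset.sum_add_distrib,
    ← Finset.sum_sub_distrib]
  congr! 2; ring

theorem ricci_kulkarniNomizu_vecMulVec {γ : Matrix α α K} (hγ : γ.IsSymm) {l : α → K}
    {r : Matrix α α K} (hr : r.IsSymm) (hlr : (γ *ᵥ l) ᵥ* r = 0) :
    ricci γ (kulkarniNomizu (vecMulVec l l) r) =
      (γ * r).trace • vecMulVec l l + (γ *ᵥ l ⬝ᵥ l) • r := by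
  have hrl : r *ᵥ (γ *ᵥ l) = 0 := by rw [← hlr, ← mulVec_transpose, hr.eq]
  have hlγ : l ᵥ* γ = γ *ᵥ l := by rw [← mulVec_transpose, hγ.eq]
  rw [ricci_kulkarniNomizu hγ, mul_vecMulVec, trace_vecMulVec, vecMulVec_mul, vecMulVec_mul, hlγ,
    hlr, Matrix.mul_assoc, mul_vecMulVec, mul_vecMulVec, hrl]
  simp

theorem vecMul_ricci_apply (I : α → K) (γ : Matrix α α K) (R : Tensor4 α K) (c : α) :
    (I ᵥ* ricci γ R) c = ∑ x, ∑ y, γ x y * contractFirst I R x c y := by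
  simp only [vecMul, dotProduct, ricci_apply, contractFirst_apply, Finset.mul_sum]
  rw [← Finset.sum_comm_cycle]
  congr! 3; ring

theorem vecMul_ricci_eq_zero {I : α → K} (γ : Matrix α α K) {R : Tensor4 α K}
    (hR : R ∈ horizontalCurvature I) : I ᵥ* ricci γ R = 0 := by
  ext c
  simp [vecMul_ricci_apply, LinearMap.mem_ker.1 hR.2]

theorem sum_mul_contractFirst_self [CharZero K] (I : α → K) {R : Tensor4 α K}
    (hR : R ∈ curvatureTensors α K) (c d : α) : ∑ b, I b * contractFirst I R b c d = 0 := by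
  simp only [contractFirst_apply, Finset.mul_sum]
  rw [← self_eq_neg]
  conv_lhs => rw [Finset.sum_comm]
  simp only [← Finset.sum_neg_distrib]
  congr! 2 with b _ a _
  rw [hR.1]; ring

theorem vecMul_ricci_vecMulVec_eq_zero [CharZero K] (I : α → K) {R : Tensor4 α K}
    (hR : R ∈ curvatureTensors α K) : I ᵥ* ricci (vecMulVec I I) R = 0 := by
  ext c
  calc (I ᵥ* ricci (vecMulVec I I) R) c
      = ∑ y, I y * ∑ x, I x * contractFirst I R x c y := by
        rw [vecMul_ricci_apply, Finset.sum_comm]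
        simp only [vecMulVec_apply, Finset.mul_sum]
        congr! 2; ring
    _ = 0 := by simp only [sum_mul_contractFirst_self I hR, mul_zero, Finset.sum_const_zero]

theorem ricci_vecMulVec_apply (I : α → K) {R : Tensor4 α K}
    (hR : R ∈ curvatureTensors α K) (b d : α) :
    ricci (vecMulVec I I) R b d = ∑ c, I c * contractFirst I R b c d := by
  simp only [ricci_apply, contractFirst_apply, vecMulVec_apply, Finset.mul_sum]
  rw [Finset.sum_comm]
  congr! 2 with c _ a _
  rw [hR.1 a b, hR.2.1 _ _ c d, neg_neg]; ring

theorem ricci_vecMulVec_eq_zero [CharZero K] {I : α → K} {R : Tensor4 α K}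
    (hR : R ∈ horizontalCurvature I) : ricci (vecMulVec I I) R = 0 := by
  ext a c
  simp only [ricci_apply, vecMulVec_apply, mul_assoc, ← Finset.mul_sum, sum_mul_fourth hR, mul_zero,
    Finset.sum_const_zero, Matrix.zero_apply]

theorem ricci_isSymm [CharZero K] {γ : Matrix α α K} (hγ : γ.IsSymm) {R : Tensor4 α K}
    (hR : R ∈ curvatureTensors α K) : (ricci γ R).IsSymm := by
  ext a c
  rw [transpose_apply, ricci_apply, Finset.sum_comm]
  simp only [ricci_apply, hγ.apply, pair_symm hR]

theorem trace_mul_ricci_comm [CharZero K] (γ δ : Matrix α α K) {R : Tensor4 α K}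
    (hR : R ∈ curvatureTensors α K) :
    (γ * ricci δ R).trace = (δ * ricci γ R).trace := by
  simp only [trace, diag_apply, mul_apply, ricci_apply, Finset.mul_sum]
  rw [Finset.sum_comm_cycle]
  congr! 1 with x _
  rw [Finset.sum_comm_cycle]
  congr! 3 with y _ a _ c _
  rw [hR.1 a y, hR.2.1 _ _ c x, pair_symm hR]; ring

/-- The scalar curvature of the metric with inverse `γ`. -/
def scalarCurvature (γ : Matrix α α K) : Tensor4 α K →ₗ[K] K :=
  Matrix.traceLinearMap α K K ∘ₗ LinearMap.mulLeft K γ ∘ₗ ricci γ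

theorem scalarCurvature_apply (γ : Matrix α α K) (R : Tensor4 α K) :
    scalarCurvature γ R = (γ * ricci γ R).trace := rfl

/-- The horizontal curvature tensors of zero scalar curvature. -/
def scalarFlat (γ : Matrix α α K) (I : α → K) : Submodule K (Tensor4 α K) :=
  horizontalCurvature I ⊓ LinearMap.ker (scalarCurvature γ)

/-- The space `𝔠` of algebraic Weyl tensors `W` with `I^A W_{AB[CD} I_{E]} = 0`. Here `γ` is the
inverse metric and `l` is `I` with its index lowered. By antisymmetry in the last two slots, the
cyclic sum is the antisymmetrization up to a factor. -/
def compatibleWeyl (γ : Matrix α α K) (I l : α → K) : Submodule K (Tensor4 α K) where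
  carrier := {W | W ∈ curvatureTensors α K ∧ ricci γ W = 0 ∧ ∀ b c d e,
    contractFirst I W b c d * l e + contractFirst I W b d e * l c
      + contractFirst I W b e c * l d = 0}
  zero_mem' := ⟨zero_mem _, map_zero _, fun b c d e => by simp [LinearMap.map_zero]⟩
  add_mem' := by
    rintro W W' ⟨hW, hWr, hWI⟩ ⟨hW', hWr', hWI'⟩
    refine ⟨add_mem hW hW', by rw [map_add, hWr, hWr', add_zero], fun b c d e => ?_⟩
    simp only [map_add, Pi.add_apply]
    linear_combination hWI b c d e + hWI' b c d e
  smul_mem' := by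
    rintro t W ⟨hW, hWr, hWI⟩
    refine ⟨Submodule.smul_mem _ t hW, by rw [map_smul, hWr, smul_zero], fun b c d e => ?_⟩
    simp only [map_smul, Pi.smul_apply, smul_eq_mul]
    linear_combination t * hWI b c d e

theorem contractFirst_of_mem_compatibleWeyl {γ : Matrix α α K} {I l : α → K}
    (hι : I ⬝ᵥ l ≠ 0) {W : Tensor4 α K} (hW : W ∈ compatibleWeyl γ I l) (b c d : α) :
    contractFirst I W b c d = (I ⬝ᵥ l)⁻¹ *
      (l c * ricci (vecMulVec I I) W b d - l d * ricci (vecMulVec I I) W b c) := by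
  obtain ⟨hcurv, -, hcomp⟩ := hW
  have hsum : ∑ e, I e * (contractFirst I W b c d * l e + contractFirst I W b d e * l c
      + contractFirst I W b e c * l d) = 0 := by simp only [hcomp, mul_zero, Finset.sum_const_zero]
  have hskew (e : α) : contractFirst I W b d e = - contractFirst I W b e d := by
    simp only [contractFirst_apply, hcurv.2.1 _ b e d, mul_neg, Finset.sum_neg_distrib]
  have hexpand : ∑ e, I e * (contractFirst I W b c d * l e + contractFirst I W b d e * l c
      + contractFirst I W b e c * l d) = (I ⬝ᵥ l) * contractFirst I W b c d
      - l c * ricci (vecMulVec I I) W b d + l d * ricci (vecMulVec I I) W b c := by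
    simp only [ricci_vecMulVec_apply I hcurv, hskew, dotProduct, Finset.sum_mul, Finset.mul_sum,
      ← Finset.sum_add_distrib, ← Finset.sum_sub_distrib]
    congr! 1; ring
  rw [hexpand] at hsum
  field_simp
  linear_combination hsum

theorem contractFirst_kulkarniNomizu_vecMulVec {I l : α → K} {r : Matrix α α K}
    (hr : I ᵥ* r = 0) (b c d : α) :
    contractFirst I (kulkarniNomizu (vecMulVec l l) r) b c d =
      (I ⬝ᵥ l) * (l c * r b d - l d * r b c) := by
  rw [contractFirst_kulkarniNomizu, hr, vecMul_vecMulVec]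
  simp only [Pi.smul_apply, smul_eq_mul, Pi.zero_apply]
  ring

/-- The correction of a horizontal curvature tensor by a multiple of `(l ⊗ l) ∧ Ric` which makes it
Ricci-flat. -/
def toWeyl (γ : Matrix α α K) (I l : α → K) : Tensor4 α K →ₗ[K] Tensor4 α K :=
  LinearMap.id - (I ⬝ᵥ l)⁻¹ • kulkarniNomizu (vecMulVec l l) ∘ₗ ricci γ

/-- The correction of a tensor by a multiple of `(l ⊗ l) ∧ W(I, ·, I, ·)`, which makes a compatible
Weyl tensor horizontal. -/
def toHorizontal (I l : α → K) : Tensor4 α K →ₗ[K] Tensor4 α K :=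
  LinearMap.id - ((I ⬝ᵥ l) ^ 2)⁻¹ • kulkarniNomizu (vecMulVec l l) ∘ₗ ricci (vecMulVec I I)

theorem toWeyl_apply (γ : Matrix α α K) (I l : α → K) (R : Tensor4 α K) :
    toWeyl γ I l R = R - (I ⬝ᵥ l)⁻¹ • kulkarniNomizu (vecMulVec l l) (ricci γ R) := rfl

theorem toHorizontal_apply (I l : α → K) (W : Tensor4 α K) :
    toHorizontal I l W =
      W - ((I ⬝ᵥ l) ^ 2)⁻¹ • kulkarniNomizu (vecMulVec l l) (ricci (vecMulVec I I) W) := rfl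

theorem ricci_vecMulVec_kulkarniNomizu (I l : α → K) {r : Matrix α α K} (hr : r.IsSymm)
    (hIr : I ᵥ* r = 0) :
    ricci (vecMulVec I I) (kulkarniNomizu (vecMulVec l l) r) = (I ⬝ᵥ l) ^ 2 • r := by
  rw [ricci_kulkarniNomizu_vecMulVec (transpose_vecMulVec I I) hr]
  · simp [vecMulVec_mulVec, vecMulVec_mul, hIr, pow_two]
  · simp [vecMulVec_mulVec, hIr, Matrix.smul_vecMul]

section Correspondence

variable [CharZero K] {γ : Matrix α α K} {I l : α → K}

theorem toWeyl_mem_compatibleWeyl (hγ : γ.IsSymm) (hl : γ *ᵥ l = I) (hι : I ⬝ᵥ l ≠ 0)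
    {R : Tensor4 α K} (hR : R ∈ scalarFlat γ I) : toWeyl γ I l R ∈ compatibleWeyl γ I l := by
  obtain ⟨hR, hscal : (γ * ricci γ R).trace = 0⟩ := hR
  have hsymm := ricci_isSymm hγ hR.1
  have hI := vecMul_ricci_eq_zero γ hR
  rw [toWeyl_apply]
  refine ⟨sub_mem hR.1 (Submodule.smul_mem _ _
    (kulkarniNomizu_mem_curvatureTensors (transpose_vecMulVec l l) hsymm)), ?_, fun b c d e => ?_⟩
  · rw [map_sub, map_smul, ricci_kulkarniNomizu_vecMulVec hγ hsymm (by rwa [hl]), hscal, hl,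
      zero_smul, zero_add, inv_smul_smul₀ hι, sub_self]
  · rw [LinearMap.map_sub, LinearMap.map_smul, LinearMap.mem_ker.1 hR.2]
    simp only [Pi.sub_apply, Pi.smul_apply, contractFirst_kulkarniNomizu_vecMulVec hI,
      Pi.zero_apply, smul_eq_mul]
    ring

theorem ricci_toHorizontal (hγ : γ.IsSymm) (hl : γ *ᵥ l = I) (hι : I ⬝ᵥ l ≠ 0) {W : Tensor4 α K}
    (hW : W ∈ compatibleWeyl γ I l) :
    ricci γ (toHorizontal I l W) = -(I ⬝ᵥ l)⁻¹ • ricci (vecMulVec I I) W := by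
  obtain ⟨hcurv, hricci, -⟩ := hW
  have hsymm := ricci_isSymm (transpose_vecMulVec I I) hcurv
  have hI := vecMul_ricci_vecMulVec_eq_zero I hcurv
  have htrace : (γ * ricci (vecMulVec I I) W).trace = 0 := by
    rw [trace_mul_ricci_comm _ _ hcurv, hricci, mul_zero, trace_zero]
  rw [toHorizontal_apply, map_sub, map_smul, hricci,
    ricci_kulkarniNomizu_vecMulVec hγ hsymm (by rwa [hl]), htrace, hl, zero_smul, zero_add,
    smul_smul, zero_sub, neg_smul]
  congr 2
  field_simp

theorem toHorizontal_mem_scalarFlat (hγ : γ.IsSymm) (hl : γ *ᵥ l = I) (hι : I ⬝ᵥ l ≠ 0)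
    {W : Tensor4 α K} (hW : W ∈ compatibleWeyl γ I l) : toHorizontal I l W ∈ scalarFlat γ I := by
  have hsymm := ricci_isSymm (transpose_vecMulVec I I) hW.1
  refine ⟨⟨sub_mem hW.1 (Submodule.smul_mem _ _
    (kulkarniNomizu_mem_curvatureTensors (transpose_vecMulVec l l) hsymm)),
    LinearMap.mem_ker.2 ?_⟩, LinearMap.mem_ker.2 ?_⟩
  · rw [toHorizontal_apply, LinearMap.map_sub, LinearMap.map_smul]
    ext b c d
    simp only [Pi.sub_apply, Pi.smul_apply, smul_eq_mul, contractFirst_of_mem_compatibleWeyl hι hW,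
      contractFirst_kulkarniNomizu_vecMulVec (vecMul_ricci_vecMulVec_eq_zero I hW.1), Pi.zero_apply]
    field_simp
    ring
  · rw [scalarCurvature_apply, ricci_toHorizontal hγ hl hι hW, Matrix.mul_smul, trace_smul,
      trace_mul_ricci_comm _ _ hW.1, hW.2.1, mul_zero, trace_zero, smul_zero]

theorem toHorizontal_toWeyl (hγ : γ.IsSymm) (hι : I ⬝ᵥ l ≠ 0) {R : Tensor4 α K}
    (hR : R ∈ horizontalCurvature I) : toHorizontal I l (toWeyl γ I l R) = R := by
  rw [toHorizontal_apply, toWeyl_apply, map_sub, map_smul, ricci_vecMulVec_eq_zero hR,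
    ricci_vecMulVec_kulkarniNomizu I l (ricci_isSymm hγ hR.1) (vecMul_ricci_eq_zero γ hR), zero_sub,
    map_neg, map_smul, map_smul, smul_neg, sub_neg_eq_add, smul_comm,
    inv_smul_smul₀ (pow_ne_zero 2 hι), sub_add_cancel]

theorem toWeyl_toHorizontal (hγ : γ.IsSymm) (hl : γ *ᵥ l = I) (hι : I ⬝ᵥ l ≠ 0) {W : Tensor4 α K}
    (hW : W ∈ compatibleWeyl γ I l) : toWeyl γ I l (toHorizontal I l W) = W := by
  rw [toWeyl_apply, ricci_toHorizontal hγ hl hι hW, toHorizontal_apply, map_smul, smul_smul]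
  match_scalars
  · ring
  · field_simp; ring

theorem finrank_compatibleWeyl_eq_finrank_scalarFlat (hγ : γ.IsSymm) (hl : γ *ᵥ l = I)
    (hι : I ⬝ᵥ l ≠ 0) :
    Module.finrank K (compatibleWeyl γ I l) = Module.finrank K (scalarFlat γ I) :=
  LinearEquiv.finrank_eq <| LinearEquiv.ofLinearMap
    ((toHorizontal I l).restrict fun _ hW => toHorizontal_mem_scalarFlat hγ hl hι hW)
    ((toWeyl γ I l).restrict fun _ hR => toWeyl_mem_compatibleWeyl hγ hl hι hR)
    (LinearMap.ext fun R => Subtype.ext <| toHorizontal_toWeyl hγ hι R.2.1)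
    (LinearMap.ext fun W => Subtype.ext <| toWeyl_toHorizontal hγ hl hι W.2)

end Correspondence

theorem scalarCurvature_kulkarniNomizu_self {γ h : Matrix α α K} (hγ : γ.IsSymm)
    (hidem : IsIdempotentElem (γ * h)) :
    scalarCurvature γ (kulkarniNomizu h h) = 2 * (γ * h).trace * ((γ * h).trace - 1) := by
  have hγh : γ * (h * γ * h) = γ * h := by
    rw [← Matrix.mul_assoc, ← Matrix.mul_assoc, Matrix.mul_assoc (γ * h), hidem.eq]
  rw [scalarCurvature_apply, ricci_kulkarniNomizu hγ]
  simp only [mul_sub, mul_add, Matrix.mul_smul, trace_sub, trace_add, trace_smul, hγh, smul_eq_mul]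
  ring

section ScalarCurvature

/-- The degenerate metric `g - l ⊗ l / g(I, I)` with radical spanned by `I`, which agrees with `g`
on `I^⊥`. -/
def horizontalMetric (g : Matrix α α K) (I : α → K) : Matrix α α K :=
  g - (I ⬝ᵥ g *ᵥ I)⁻¹ • vecMulVec (g *ᵥ I) (g *ᵥ I)

variable {g γ : Matrix α α K} {I : α → K}

theorem horizontalMetric_isSymm (hg : g.IsSymm) : (horizontalMetric g I).IsSymm :=
  hg.sub (IsSymm.smul (transpose_vecMulVec _ _) _)

theorem vecMul_horizontalMetric (hg : g.IsSymm) (hι : I ⬝ᵥ g *ᵥ I ≠ 0) :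
    I ᵥ* horizontalMetric g I = 0 := by
  have hIg : I ᵥ* g = g *ᵥ I := by rw [← mulVec_transpose, hg.eq]
  rw [horizontalMetric, Matrix.vecMul_sub, vecMul_smul, vecMul_vecMulVec, inv_smul_smul₀ hι, hIg,
    sub_self]

variable [DecidableEq α]

theorem mul_horizontalMetric (hγg : γ * g = 1) :
    γ * horizontalMetric g I = 1 - vecMulVec ((I ⬝ᵥ g *ᵥ I)⁻¹ • I) (g *ᵥ I) := by
  rw [horizontalMetric, mul_sub, hγg, Matrix.mul_smul, mul_vecMulVec, mulVec_mulVec, hγg,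
    one_mulVec, smul_vecMulVec]

variable [CharZero K]

theorem exists_scalarCurvature_ne_zero (hg : g.IsSymm) (hγ : γ.IsSymm) (hγg : γ * g = 1)
    (hι : I ⬝ᵥ g *ᵥ I ≠ 0) (hcard : 3 ≤ Fintype.card α) :
    ∃ R ∈ horizontalCurvature I, scalarCurvature γ R ≠ 0 := by
  set p := horizontalMetric g I
  have hsymm : p.IsSymm := horizontalMetric_isSymm hg
  have hγp : γ * p = 1 - vecMulVec ((I ⬝ᵥ g *ᵥ I)⁻¹ • I) (g *ᵥ I) := mul_horizontalMetric hγg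
  have hunit : g *ᵥ I ⬝ᵥ (I ⬝ᵥ g *ᵥ I)⁻¹ • I = 1 := by
    rw [dotProduct_comm, smul_dotProduct, smul_eq_mul, inv_mul_cancel₀ hι]
  have hidem : IsIdempotentElem (γ * p) := hγp ▸ isIdempotentElem_one_sub_vecMulVec hunit
  refine ⟨kulkarniNomizu p p, ⟨kulkarniNomizu_mem_curvatureTensors hsymm hsymm,
    LinearMap.mem_ker.2 ?_⟩, ?_⟩
  · ext b c d
    simp [contractFirst_kulkarniNomizu, vecMul_horizontalMetric hg hι, p]
  · obtain ⟨m, hm⟩ := Nat.exists_eq_add_of_le' hcard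
    have hvalue : scalarCurvature γ (kulkarniNomizu p p) = ((2 * (m + 2) * (m + 1) : ℕ) : K) := by
      rw [scalarCurvature_kulkarniNomizu_self hγ hidem, hγp, trace_one_sub_vecMulVec hunit, hm]
      push_cast
      ring
    rw [hvalue]
    exact Nat.cast_ne_zero.2 (by positivity)

theorem finrank_scalarFlat_add_one (hg : g.IsSymm) (hγ : γ.IsSymm) (hγg : γ * g = 1)
    (hι : I ⬝ᵥ g *ᵥ I ≠ 0) (hcard : 3 ≤ Fintype.card α) :
    Module.finrank K (scalarFlat γ I) + 1 = Module.finrank K (horizontalCurvature I) := by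
  obtain ⟨R, hR, hscal⟩ := exists_scalarCurvature_ne_zero hg hγ hγg hι hcard
  exact finrank_inf_ker_add_one hR hscal

end ScalarCurvature

end Contractions

theorem ker_weylCondMap {N : ℕ} (g γ : Fin N → Fin N → ℝ) (I : Fin N → ℝ) :
    LinearMap.ker (weylCondMap g γ I) = compatibleWeyl (of γ) I (of g *ᵥ I) := by
  ext W
  rw [LinearMap.mem_ker]
  constructor
  · intro hW
    have hcomponent (i : Fin 5) (a b c d e : Fin N) : weylCondMap g γ I W i a b c d e = 0 := by
      rw [hW]; rfl
    refine ⟨⟨fun a b c d => ?_, fun a b c d => ?_, fun a b c d => ?_⟩, ?_, fun b c d e => ?_⟩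
    · exact eq_neg_of_add_eq_zero_right (hcomponent 0 a b c d a)
    · exact eq_neg_of_add_eq_zero_right (hcomponent 1 a b c d a)
    · exact hcomponent 2 a b c d a
    · ext a c
      exact hcomponent 3 a a c a a
    · simp only [contractFirst_apply]
      exact hcomponent 4 b b c d e
  · rintro ⟨⟨hskew₁, hskew₂, hbianchi⟩, hricci, hcompat⟩
    simp only [contractFirst_apply] at hcompat
    funext i a b c d e
    fin_cases i
    · exact neg_eq_iff_add_eq_zero.1 (hskew₁ a b c d).symm
    · exact neg_eq_iff_add_eq_zero.1 (hskew₂ a b c d).symm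
    · exact hbianchi a b c d
    · exact congr_fun₂ hricci a c
    · exact hcompat b c d e

end Tensor4

open Tensor4

theorem dim_compatible_weyl_general {α K : Type*} [Fintype α] [DecidableEq α] [Field K]
    [CharZero K] {n : ℕ} (hn : 1 ≤ n) (hα : Fintype.card α = n + 2) {g γ : Matrix α α K}
    (hg : g.IsSymm) (hγg : γ * g = 1) {I : α → K} (hι : I ⬝ᵥ g *ᵥ I ≠ 0) :
    Module.finrank K (compatibleWeyl γ I (g *ᵥ I)) = n * (n + 1) ^ 2 * (n + 2) / 12 - 1 := by
  have hγ : γ.IsSymm := inv_eq_left_inv hγg ▸ hg.inv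
  have hγl : γ *ᵥ (g *ᵥ I) = I := by rw [mulVec_mulVec, hγg, one_mulVec]
  have hI : I ≠ 0 := by rintro rfl; simp at hι
  have hflat := finrank_scalarFlat_add_one hg hγ hγg hι (by lia)
  have hhoriz : 12 * Module.finrank K (horizontalCurvature I) = n * (n + 1) ^ 2 * (n + 2) := by
    rw [← Nat.cast_inj (R := K)]
    push_cast
    rw [finrank_horizontalCurvature hI, hα]
    push_cast
    field_simp
    ring
  rw [finrank_compatibleWeyl_eq_finrank_scalarFlat hγ hγl hι]
  lia

/-- for `ι = g(I,I) ≠ 0`, the space of algebraic Weyl tensors `W`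
on the `(n+2)`-dimensional space satisfying `I^A W_{AB[CD} I_{E]} = 0` has
dimension `n(n+1)²(n+2)/12 - 1`. -/
theorem dim_compatible_weyl {n : ℕ} (hn : 1 ≤ n)
    (g gi : Fin (n + 2) → Fin (n + 2) → ℝ)
    (hgsymm : ∀ a b, g a b = g b a)
    (hginv : ∀ a b, (∑ c, gi a c * g c b) = if a = b then (1 : ℝ) else 0)
    (I : Fin (n + 2) → ℝ) (ι : ℝ)
    (hι : ι = ∑ a, ∑ b, g a b * I a * I b) (hι0 : ι ≠ 0) :
    Module.finrank ℝ (LinearMap.ker (weylCondMap g gi I))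
      = n * (n + 1) ^ 2 * (n + 2) / 12 - 1 := by
  have hg : (of g).IsSymm := ext fun a b => hgsymm b a
  have hinv : of gi * of g = 1 := ext fun a b => by rw [mul_apply, one_apply, ← hginv a b]; rfl
  have hnorm : I ⬝ᵥ of g *ᵥ I = ι := by
    rw [hι]
    simp only [dotProduct, mulVec, Finset.mul_sum, of_apply]
    congr! 2; ring
  rw [ker_weylCondMap]
  exact dim_compatible_weyl_general hn (Fintype.card_fin _) hg hinv (hnorm ▸ hι0)
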